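/- Under the stated setup and assumptions, for every p ∈ [1,∞] both (Σ_{j=1}^k sin^p θ_j')^{1/p} and (Σ_{j=1}^k sin^p ν_j')^{1/p} are bounded above by √2 · (γ_k^{2q}/(1−γ_k)) · (‖Σ_⊥‖_p/σ_k) · ‖Ω_2Ω_1†‖₂, where θ_j' and ν_j' are the canonical angles between the column spaces of U_k and Û_k, and of V_k and V̂_k, respectively. -/

import Mathlib

open scoped ENNReal
open Matrix

/-- The `j`-th largest singular value (0-indexed) of a complex matrix,
obtained as the decreasingly sorted square roots of the eigenvalues of `Mᴴ * M`. -/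
noncomputable def sval {m n : ℕ} (M : Matrix (Fin m) (Fin n) ℂ) (j : ℕ) : ℝ :=
  (List.insertionSort (· ≥ ·)
    ((List.ofFn (Matrix.isHermitian_conjTranspose_mul_self M).eigenvalues).map Real.sqrt)).getD j 0

/-- The Schatten-`p` norm (`p = ∞` gives the spectral norm). -/
noncomputable def schatten {m n : ℕ} (p : ℝ≥0∞) (M : Matrix (Fin m) (Fin n) ℂ) : ℝ :=
  if p = ⊤ then sval M 0
  else (∑ j ∈ Finset.range n, sval M j ^ p.toReal) ^ (1 / p.toReal)

/-- Moore–Penrose pseudoinverse of a full-row-rank matrix. -/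
noncomputable def rpinv {a b : ℕ} (M : Matrix (Fin a) (Fin b) ℂ) : Matrix (Fin b) (Fin a) ℂ :=
  Mᴴ * (M * Mᴴ)⁻¹

/-- Rectangular diagonal matrix with entries `σ (off), σ (off+1), …` on the diagonal. -/
noncomputable def diagRect (σ : ℕ → ℝ) (off a b : ℕ) : Matrix (Fin a) (Fin b) ℂ :=
  Matrix.of fun i j => if (i : ℕ) = (j : ℕ) then (σ (off + (i : ℕ)) : ℂ) else 0

/-- The first `b` columns of a matrix with `b + c` columns. -/
def colsL {a b c : ℕ} (M : Matrix (Fin a) (Fin (b + c)) ℂ) : Matrix (Fin a) (Fin b) ℂ :=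
  M.submatrix id (Fin.castAdd c)

/-- The last `c` columns of a matrix with `b + c` columns. -/
def colsR {a b c : ℕ} (M : Matrix (Fin a) (Fin (b + c)) ℂ) : Matrix (Fin a) (Fin c) ℂ :=
  M.submatrix id (Fin.natAdd b)

/-!
Let `P = 1 - Q Qᴴ`, so that `A - Q Qᴴ A = P A`. The range of the iterate, which `P` annihilates,
contains the columns of `A (V₁ + V₂ L)` for some `L` with `‖L‖ ≤ γ_k ^ (2 q) ‖Ω₂ Ω₁†‖`. Hence
`P A V₁ = -P A V₂ L` is small, and `U₁ᴴ P A = U₁ᴴ P U₂ Σ_⊥ (V₂ - V₁ Lᴴ)ᴴ` is small as well: with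
`η = ‖L‖`, the factor `‖U₁ᴴ P U₂‖ ‖V₂ - V₁ Lᴴ‖` is at most `min (η, 1) √(1 + η ^ 2) ≤ √2 η`, the
source of the constant. Wedin's theorem turns these two residuals into sines of angles at the price
of a factor `1 / (σ_k - σ_{k+1})`, since by interlacing the tail of the singular values of `Q Qᴴ A`
stays below `σ_{k+1}`. The properties of Schatten norms needed for this all come from the inequality
`‖diag (W M Z)‖_p ≤ ‖W‖ ‖M‖_p ‖Z‖`, an instance of Schur's test that is sharp for suitable
contractions `W` and `Z`.
-/

open scoped Matrix.Norms.L2Operator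

section SchurTest

variable {ι κ E : Type*} [Fintype ι] [Fintype κ] [SeminormedAddCommGroup E]

lemma rpow_sum_mul_le {r C : ℝ} (hr : 1 ≤ r) {c s : κ → ℝ} (hs : ∀ j, 0 ≤ s j)
    (hc : ∀ j, 0 ≤ c j) (hC : ∑ j, c j ≤ C) :
    (∑ j, c j * s j) ^ r ≤ C ^ (r - 1) * ∑ j, c j * s j ^ r := by
  have hr0 : 0 < r := by positivity
  have hsum : 0 ≤ ∑ j, c j := Finset.sum_nonneg fun j _ => hc j
  have hpow : 0 ≤ ∑ j, c j * s j ^ r :=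
    Finset.sum_nonneg fun j _ => mul_nonneg (hc j) (Real.rpow_nonneg (hs j) r)
  calc (∑ j, c j * s j) ^ r
      ≤ ((∑ j, c j) ^ (1 - r⁻¹) * (∑ j, c j * s j ^ r) ^ r⁻¹) ^ r :=
        Real.rpow_le_rpow (Finset.sum_nonneg fun j _ => mul_nonneg (hc j) (hs j))
          (Real.inner_le_weight_mul_Lp_of_nonneg Finset.univ hr c s hc hs) hr0.le
    _ = (∑ j, c j) ^ (r - 1) * ∑ j, c j * s j ^ r := by
        rw [Real.mul_rpow (Real.rpow_nonneg hsum _) (Real.rpow_nonneg hpow _), ← Real.rpow_mul hsum,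
          Real.rpow_inv_rpow hpow hr0.ne', sub_mul, one_mul, inv_mul_cancel₀ hr0.ne']
    _ ≤ C ^ (r - 1) * ∑ j, c j * s j ^ r := by
        gcongr

lemma sum_rpow_norm_le_of_schur {r C : ℝ} (hr : 1 ≤ r) (hC : 0 ≤ C) {x : ι → E} {s : κ → ℝ}
    {c : ι → κ → ℝ} (hs : ∀ j, 0 ≤ s j) (hc : ∀ i j, 0 ≤ c i j) (hrow : ∀ i, ∑ j, c i j ≤ C)
    (hcol : ∀ j, ∑ i, c i j ≤ C) (hx : ∀ i, ‖x i‖ ≤ ∑ j, c i j * s j) :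
    ∑ i, ‖x i‖ ^ r ≤ C ^ r * ∑ j, s j ^ r := by
  calc ∑ i, ‖x i‖ ^ r ≤ ∑ i, C ^ (r - 1) * ∑ j, c i j * s j ^ r :=
        Finset.sum_le_sum fun i _ =>
          (Real.rpow_le_rpow (norm_nonneg _) (hx i) (by positivity)).trans
            (rpow_sum_mul_le hr hs (hc i) (hrow i))
    _ = C ^ (r - 1) * ∑ j, (∑ i, c i j) * s j ^ r := by
        rw [← Finset.mul_sum, Finset.sum_comm]
        simp only [Finset.sum_mul]
    _ ≤ C ^ (r - 1) * ∑ j, C * s j ^ r := by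
        gcongr with j
        · exact Real.rpow_nonneg (hs j) r
        · exact hcol j
    _ = C ^ r * ∑ j, s j ^ r := by
        rw [← Finset.mul_sum, ← mul_assoc, ← Real.rpow_add_one' hC (by linarith), sub_add_cancel]

lemma norm_toLp_le_of_schur {p : ℝ≥0∞} [Fact (1 ≤ p)] {C : ℝ} (hC : 0 ≤ C) {x : ι → E}
    {s : κ → ℝ} {c : ι → κ → ℝ} (hs : ∀ j, 0 ≤ s j) (hc : ∀ i j, 0 ≤ c i j)
    (hrow : ∀ i, ∑ j, c i j ≤ C) (hcol : ∀ j, ∑ i, c i j ≤ C)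
    (hx : ∀ i, ‖x i‖ ≤ ∑ j, c i j * s j) :
    ‖WithLp.toLp p x‖ ≤ C * ‖WithLp.toLp p s‖ := by
  rcases eq_or_ne p ⊤ with rfl | hp
  · rw [PiLp.norm_toLp, PiLp.norm_toLp]
    refine (pi_norm_le_iff_of_nonneg (by positivity)).2 fun i => (hx i).trans ?_
    calc ∑ j, c i j * s j ≤ ∑ j, c i j * ‖s‖ := by
          gcongr with j
          · exact hc i j
          · exact (le_abs_self _).trans (norm_le_pi_norm s j)
      _ = (∑ j, c i j) * ‖s‖ := by rw [Finset.sum_mul]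
      _ ≤ C * ‖s‖ := by gcongr; exact hrow i
  · have hr : 1 ≤ p.toReal := by
      simpa using ENNReal.toReal_mono hp (Fact.out : 1 ≤ p)
    have hr0 : 0 < p.toReal := by positivity
    have hsum : 0 ≤ ∑ j, s j ^ p.toReal := Finset.sum_nonneg fun j _ => Real.rpow_nonneg (hs j) _
    simp only [PiLp.norm_eq_sum hr0, Real.norm_of_nonneg (hs _)]
    calc (∑ i, ‖x i‖ ^ p.toReal) ^ (1 / p.toReal)
        ≤ (C ^ p.toReal * ∑ j, s j ^ p.toReal) ^ (1 / p.toReal) :=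
          Real.rpow_le_rpow (by positivity) (sum_rpow_norm_le_of_schur hr hC hs hc hrow hcol hx)
            (by positivity)
      _ = C * (∑ j, s j ^ p.toReal) ^ (1 / p.toReal) := by
          rw [Real.mul_rpow (by positivity) hsum, one_div, Real.rpow_rpow_inv hC hr0.ne']

lemma norm_toLp_congr {F : Type*} [SeminormedAddCommGroup F] {p : ℝ≥0∞} [Fact (1 ≤ p)] {x : ι → E}
    {y : ι → F} (h : ∀ i, ‖x i‖ = ‖y i‖) : ‖WithLp.toLp p x‖ = ‖WithLp.toLp p y‖ := by
  rcases eq_or_ne p ⊤ with rfl | hp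
  · simp only [PiLp.norm_eq_ciSup, h]
  · simp only [PiLp.norm_eq_sum (ENNReal.toReal_pos (zero_lt_one.trans_le Fact.out).ne' hp), h]

end SchurTest

section OperatorNorm

variable {𝕜 m n ι κ : Type*} [RCLike 𝕜] [Fintype m] [Fintype n] [Fintype ι] [Fintype κ]
  [DecidableEq n] [DecidableEq ι]

lemma sqrt_sum_norm_sq_col_le (M : Matrix m n 𝕜) (j : n) : √(∑ i, ‖M i j‖ ^ 2) ≤ ‖M‖ := by
  simpa [EuclideanSpace.norm_eq] using l2_opNorm_mulVec M (EuclideanSpace.single j 1)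

lemma sqrt_sum_norm_sq_row_le (M : Matrix m n 𝕜) (i : m) : √(∑ j, ‖M i j‖ ^ 2) ≤ ‖M‖ := by
  classical
  simpa [l2_opNorm_conjTranspose] using sqrt_sum_norm_sq_col_le Mᴴ i

lemma l2_opNorm_one_le : ‖(1 : Matrix n n 𝕜)‖ ≤ 1 := IsStarProjection.norm_le 1 (.one _)

lemma l2_opNorm_le_one_of_conjTranspose_mul_self {M : Matrix m n 𝕜} (h : Mᴴ * M = 1) :
    ‖M‖ ≤ 1 := by
  have hsq := l2_opNorm_conjTranspose_mul_self M
  rw [h, ← sq] at hsq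
  exact (sq_le_one_iff₀ (norm_nonneg M)).1 (hsq ▸ l2_opNorm_one_le)

lemma l2_opNorm_mul_mul_le_of_le_one {B : Matrix m n 𝕜} {C : Matrix n ι 𝕜} {D : Matrix ι κ 𝕜}
    [DecidableEq κ] (hB : ‖B‖ ≤ 1) (hD : ‖D‖ ≤ 1) : ‖B * C * D‖ ≤ ‖C‖ :=
  calc ‖B * C * D‖ ≤ ‖B‖ * ‖C‖ * ‖D‖ :=
        (l2_opNorm_mul _ _).trans (by gcongr; exact l2_opNorm_mul _ _)
    _ ≤ 1 * ‖C‖ * 1 := by gcongr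
    _ = ‖C‖ := by ring

lemma isStarProjection_one_sub_mul_conjTranspose [DecidableEq m] {M : Matrix m n 𝕜}
    (h : Mᴴ * M = 1) : IsStarProjection (1 - M * Mᴴ) := by
  refine IsStarProjection.one_sub ⟨?_, ?_⟩
  · rw [IsIdempotentElem, Matrix.mul_assoc, ← Matrix.mul_assoc Mᴴ, h, Matrix.one_mul]
  · exact isHermitian_mul_conjTranspose_self M

lemma one_sub_mul_conjTranspose_mul_self [DecidableEq m] {M : Matrix m n 𝕜} (h : Mᴴ * M = 1) :
    (1 - M * Mᴴ) * M = 0 := by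
  rw [Matrix.sub_mul, Matrix.mul_assoc, h, Matrix.one_mul, Matrix.mul_one, sub_self]

lemma isUnit_diagonal_of_le_norm {v : n → 𝕜} {t : ℝ} (ht : 0 < t) (h : ∀ i, t ≤ ‖v i‖) :
    IsUnit (diagonal v) :=
  isUnit_diagonal.2 <| Pi.isUnit_iff.2 fun i => .mk0 _ (norm_pos_iff.1 (ht.trans_le (h i)))

lemma mul_l2_opNorm_inv_diagonal_le_one {v : n → 𝕜} {t : ℝ} (ht : 0 < t) (h : ∀ i, t ≤ ‖v i‖) :
    t * ‖(diagonal v)⁻¹‖ ≤ 1 := by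
  have hinv : (diagonal v)⁻¹ = diagonal v⁻¹ := by
    refine inv_eq_left_inv ?_
    rw [diagonal_mul_diagonal, ← diagonal_one]
    congr 1 with i
    exact inv_mul_cancel₀ (norm_pos_iff.1 (ht.trans_le (h i)))
  rw [hinv, l2_opNorm_diagonal, ← le_div_iff₀' ht]
  refine (pi_norm_le_iff_of_nonneg (by positivity)).2 fun i => ?_
  rw [Pi.inv_apply, norm_inv, ← one_div]
  exact one_div_le_one_div_of_le ht (h i)

lemma l2_opNorm_submatrix_le {m' n' : Type*} [Fintype m'] [Fintype n'] [DecidableEq n']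
    (M : Matrix m n 𝕜) {f : m' → m} {g : n' → n} (hf : f.Injective) (hg : g.Injective) :
    ‖M.submatrix f g‖ ≤ ‖M‖ := by
  classical
  have hrow : ‖(1 : Matrix m m 𝕜).submatrix f id‖ ≤ 1 := by
    rw [← l2_opNorm_conjTranspose]
    refine l2_opNorm_le_one_of_conjTranspose_mul_self ?_
    rw [conjTranspose_conjTranspose, conjTranspose_submatrix, conjTranspose_one,
      ← submatrix_mul _ _ _ _ _ Function.bijective_id, Matrix.one_mul, submatrix_one f hf]
  have hcol : ‖(1 : Matrix n n 𝕜).submatrix id g‖ ≤ 1 := by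
    refine l2_opNorm_le_one_of_conjTranspose_mul_self ?_
    rw [conjTranspose_submatrix, conjTranspose_one, ← submatrix_mul _ _ _ _ _ Function.bijective_id,
      Matrix.one_mul, submatrix_one g hg]
  have hfactor : M.submatrix f g =
      (1 : Matrix m m 𝕜).submatrix f id * M * (1 : Matrix n n 𝕜).submatrix id g := by
    nth_rw 1 [← Matrix.one_mul M, ← Matrix.mul_one (1 * M),
      submatrix_mul _ _ f id g Function.bijective_id, submatrix_mul _ _ f id id
        Function.bijective_id, submatrix_id_id]
  exact hfactor ▸ l2_opNorm_mul_mul_le_of_le_one hrow hcol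

lemma one_le_l2_opNorm_inv_mul_of_eq_mul_add {G T : Matrix n n 𝕜} (hG : IsUnit G)
    {C : Matrix n κ 𝕜} {F : Matrix κ n 𝕜} (hcard : Fintype.card κ < Fintype.card n)
    (h : G = C * F + T) : 1 ≤ ‖G⁻¹‖ * ‖T‖ := by
  by_contra! hlt
  have hunit : IsUnit (1 - G⁻¹ * T) :=
    isUnit_one_sub_of_norm_lt_one ((l2_opNorm_mul _ _).trans_lt hlt)
  have hCF : C * F = G * (1 - G⁻¹ * T) := by
    rw [Matrix.mul_sub, Matrix.mul_one, mul_nonsing_inv_cancel_left _ _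
      ((isUnit_iff_isUnit_det _).1 hG), h, add_sub_cancel_right]
  have hrank : (C * F).rank = Fintype.card n := rank_of_isUnit _ (hCF ▸ hG.mul hunit)
  have := (rank_mul_le_left C F).trans (rank_le_card_width C)
  omega

end OperatorNorm

section Schatten

variable {𝕜 l m n r : Type*} [RCLike 𝕜] [Fintype m]

open scoped ComplexOrder in
lemma apply_eq_zero_of_conjTranspose_mul_self_apply_eq_zero {N : Matrix m n 𝕜} {j : n}
    (h : (Nᴴ * N) j j = 0) (i : m) : N i j = 0 :=
  congr_fun (dotProduct_star_self_eq_zero.1 h : N.col j = 0) i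

variable [Fintype l] [Fintype n] [Fintype r] [DecidableEq n]

/-- The singular values of `M` with multiplicity, indexed by the columns of `M` in the (arbitrary)
order in which Mathlib lists the eigenvalues of `Mᴴ * M`. -/
noncomputable def singVal (M : Matrix m n 𝕜) (i : n) : ℝ :=
  √((isHermitian_conjTranspose_mul_self M).eigenvalues i)

lemma singVal_nonneg (M : Matrix m n 𝕜) (i : n) : 0 ≤ singVal M i :=
  Real.sqrt_nonneg _

/-- The Schatten `p`-norm of a matrix over `ℝ` or `ℂ`: the `ℓᵖ` norm of its singular values. -/
noncomputable def schattenNorm (p : ℝ≥0∞) [Fact (1 ≤ p)] (M : Matrix m n 𝕜) : ℝ :=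
  ‖WithLp.toLp p (singVal M)‖

variable (p : ℝ≥0∞) [Fact (1 ≤ p)]

lemma schattenNorm_nonneg (M : Matrix m n 𝕜) : 0 ≤ schattenNorm p M :=
  norm_nonneg _

lemma exists_contraction_of_conjTranspose_mul_self_eq_diagonal {N : Matrix m n 𝕜} {s : n → ℝ}
    (h : Nᴴ * N = diagonal fun i => (s i : 𝕜) ^ 2) :
    ∃ W : Matrix m n 𝕜, ‖W‖ ≤ 1 ∧ W * diagonal (fun i => (s i : 𝕜)) = N ∧
      Wᴴ * N = diagonal fun i => (s i : 𝕜) := by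
  set W := N * diagonal fun i => ((s i)⁻¹ : 𝕜) with hW
  have hWN : Wᴴ * N = diagonal fun i => (s i : 𝕜) := by
    rw [hW, conjTranspose_mul, Matrix.mul_assoc, h, diagonal_conjTranspose, diagonal_mul_diagonal]
    congr 1 with i
    by_cases hi : (s i : 𝕜) = 0
    · simp [hi]
    · simp only [Pi.star_apply, star_inv₀, RCLike.star_def, RCLike.conj_ofReal]
      field_simp
  refine ⟨W, ?_, ?_, hWN⟩
  · have hsq := l2_opNorm_conjTranspose_mul_self W
    nth_rw 2 [hW] at hsq
    rw [← Matrix.mul_assoc, hWN, diagonal_mul_diagonal, l2_opNorm_diagonal, ← sq] at hsq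
    refine (sq_le_one_iff₀ (norm_nonneg W)).1 (hsq ▸ ?_)
    refine (pi_norm_le_iff_of_nonneg zero_le_one).2 fun i => ?_
    by_cases hi : (s i : 𝕜) = 0
    · simp [hi]
    · simp [mul_inv_cancel₀ hi]
  · ext i j
    rw [mul_diagonal, hW, mul_diagonal]
    by_cases hj : (s j : 𝕜) = 0
    · have hNij : N i j = 0 :=
        apply_eq_zero_of_conjTranspose_mul_self_apply_eq_zero (by simp [h, hj]) i
      rw [hj, mul_zero, hNij]
    · rw [inv_mul_cancel_right₀ hj]

lemma exists_svd (M : Matrix m n 𝕜) :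
    ∃ (W : Matrix m n 𝕜) (Z : Matrix n n 𝕜), ‖W‖ ≤ 1 ∧ ‖Z‖ ≤ 1 ∧
      M = W * diagonal (fun i => (singVal M i : 𝕜)) * Zᴴ ∧
      Wᴴ * M * Z = diagonal fun i => (singVal M i : 𝕜) := by
  have hH := isHermitian_conjTranspose_mul_self M
  let Z : Matrix n n 𝕜 := hH.eigenvectorUnitary
  have hZZ : Zᴴ * Z = 1 := Unitary.coe_star_mul_self hH.eigenvectorUnitary
  have hZZ' : Z * Zᴴ = 1 := Unitary.coe_mul_star_self hH.eigenvectorUnitary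
  have hspec : Zᴴ * (Mᴴ * M) * Z = diagonal fun i => (hH.eigenvalues i : 𝕜) := by
    have h := hH.conjStarAlgAut_star_eigenvectorUnitary
    rw [Unitary.conjStarAlgAut_star_apply] at h
    exact h
  have hMZ : (M * Z)ᴴ * (M * Z) = diagonal fun i => (singVal M i : 𝕜) ^ 2 := by
    rw [conjTranspose_mul, Matrix.mul_assoc, ← Matrix.mul_assoc Mᴴ, ← Matrix.mul_assoc, hspec]
    congr 1 with i
    rw [← RCLike.ofReal_pow, singVal,
      Real.sq_sqrt (eigenvalues_conjTranspose_mul_self_nonneg M i)]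
  obtain ⟨W, hW, hWD, hWM⟩ := exists_contraction_of_conjTranspose_mul_self_eq_diagonal hMZ
  refine ⟨W, Z, hW, l2_opNorm_le_one_of_conjTranspose_mul_self hZZ, ?_, ?_⟩
  · rw [hWD, Matrix.mul_assoc, hZZ', Matrix.mul_one]
  · rw [Matrix.mul_assoc, hWM]

lemma norm_singVal (M : Matrix m n 𝕜) : ‖singVal M‖ = ‖M‖ := by
  classical
  obtain ⟨W, Z, hW, hZ, hM, hD⟩ := exists_svd M
  have hdiag : ‖diagonal fun i => (singVal M i : 𝕜)‖ = ‖singVal M‖ := by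
    rw [l2_opNorm_diagonal, Pi.norm_def, Pi.norm_def]
    simp
  apply le_antisymm
  · rw [← hdiag, ← hD]
    exact l2_opNorm_mul_mul_le_of_le_one (by rwa [l2_opNorm_conjTranspose]) hZ
  · rw [← hdiag]
    nth_rw 1 [hM]
    exact l2_opNorm_mul_mul_le_of_le_one hW (by rwa [l2_opNorm_conjTranspose])

lemma sum_norm_row_mul_norm_col_le [DecidableEq m] (F : Matrix l m 𝕜) (G : Matrix m n 𝕜)
    (i : l) (j : n) : ∑ x, ‖F i x‖ * ‖G x j‖ ≤ ‖F‖ * ‖G‖ :=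
  (Real.sum_mul_le_sqrt_mul_sqrt _ _ _).trans <|
    mul_le_mul (sqrt_sum_norm_sq_row_le F i) (sqrt_sum_norm_sq_col_le G j) (Real.sqrt_nonneg _)
      (norm_nonneg _)

lemma norm_diag_mul_mul_le [DecidableEq m] [DecidableEq r] (W : Matrix r m 𝕜) (M : Matrix m n 𝕜)
    (Z : Matrix n r 𝕜) :
    ‖WithLp.toLp p (W * M * Z).diag‖ ≤ ‖W‖ * schattenNorm p M * ‖Z‖ := by
  obtain ⟨W₀, Z₀, hW₀, hZ₀, hM, -⟩ := exists_svd M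
  let F := W * W₀
  let G := Z₀ᴴ * Z
  have hFG : ‖F‖ * ‖G‖ ≤ ‖W‖ * ‖Z‖ := by
    have hF : ‖F‖ ≤ ‖W‖ :=
      (l2_opNorm_mul _ _).trans (mul_le_of_le_one_right (norm_nonneg _) hW₀)
    have hG : ‖G‖ ≤ ‖Z‖ := (l2_opNorm_mul _ _).trans
      (mul_le_of_le_one_left (norm_nonneg _) (by rwa [l2_opNorm_conjTranspose]))
    gcongr
  have hprod : W * M * Z = F * diagonal (fun i => (singVal M i : 𝕜)) * G := by
    nth_rw 1 [hM]
    simp only [F, G, Matrix.mul_assoc]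
  refine (norm_toLp_le_of_schur (c := fun i j => ‖F i j‖ * ‖G j i‖) (by positivity)
    (singVal_nonneg M) (fun i j => by positivity)
    (fun i => (sum_norm_row_mul_norm_col_le F G i i).trans hFG) (fun j => ?_)
    fun i => ?_).trans_eq (by rw [schattenNorm]; ring)
  · simpa only [mul_comm] using (sum_norm_row_mul_norm_col_le G F j j).trans
      ((mul_comm _ _).trans_le hFG)
  · rw [diag_apply, hprod, mul_apply]
    refine (norm_sum_le _ _).trans_eq (Finset.sum_congr rfl fun j _ => ?_)
    rw [mul_diagonal, norm_mul, norm_mul, RCLike.norm_ofReal, abs_of_nonneg (singVal_nonneg M j)]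
    ring

lemma exists_norm_diag_eq_schattenNorm (M : Matrix m n 𝕜) :
    ∃ (W : Matrix m n 𝕜) (Z : Matrix n n 𝕜), ‖W‖ ≤ 1 ∧ ‖Z‖ ≤ 1 ∧
      schattenNorm p M = ‖WithLp.toLp p (Wᴴ * M * Z).diag‖ := by
  obtain ⟨W, Z, hW, hZ, -, hD⟩ := exists_svd M
  exact ⟨W, Z, hW, hZ, norm_toLp_congr fun i => by simp [hD]⟩

lemma schattenNorm_add_le (M N : Matrix m n 𝕜) :
    schattenNorm p (M + N) ≤ schattenNorm p M + schattenNorm p N := by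
  classical
  obtain ⟨W, Z, hW, hZ, hMN⟩ := exists_norm_diag_eq_schattenNorm p (M + N)
  have hWH : ‖Wᴴ‖ ≤ 1 := by rwa [l2_opNorm_conjTranspose]
  have hcontr (L : Matrix m n 𝕜) : ‖WithLp.toLp p (Wᴴ * L * Z).diag‖ ≤ schattenNorm p L := by
    have := schattenNorm_nonneg p L
    calc _ ≤ ‖Wᴴ‖ * schattenNorm p L * ‖Z‖ := norm_diag_mul_mul_le p _ _ _
      _ ≤ 1 * schattenNorm p L * 1 := by gcongr
      _ = schattenNorm p L := by ring
  rw [hMN, Matrix.mul_add, Matrix.add_mul, diag_add, WithLp.toLp_add]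
  exact (norm_add_le _ _).trans (add_le_add (hcontr M) (hcontr N))

lemma schattenNorm_mul_mul_le [DecidableEq m] [DecidableEq r] (B : Matrix l m 𝕜) (C : Matrix m n 𝕜)
    (D : Matrix n r 𝕜) :
    schattenNorm p (B * C * D) ≤ ‖B‖ * schattenNorm p C * ‖D‖ := by
  classical
  obtain ⟨W, Z, hW, hZ, hBCD⟩ := exists_norm_diag_eq_schattenNorm p (B * C * D)
  have hWB : ‖Wᴴ * B‖ ≤ ‖B‖ := (l2_opNorm_mul _ _).trans
    (mul_le_of_le_one_left (norm_nonneg _) (by rwa [l2_opNorm_conjTranspose]))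
  have hDZ : ‖D * Z‖ ≤ ‖D‖ := (l2_opNorm_mul _ _).trans (mul_le_of_le_one_right (norm_nonneg _) hZ)
  have := schattenNorm_nonneg p C
  calc schattenNorm p (B * C * D) = ‖WithLp.toLp p ((Wᴴ * B) * C * (D * Z)).diag‖ := by
        rw [hBCD]
        simp only [Matrix.mul_assoc]
    _ ≤ ‖Wᴴ * B‖ * schattenNorm p C * ‖D * Z‖ := norm_diag_mul_mul_le p _ _ _
    _ ≤ ‖B‖ * schattenNorm p C * ‖D‖ := by gcongr

lemma schattenNorm_mul_le_left [DecidableEq m] (B : Matrix l m 𝕜) (C : Matrix m n 𝕜) :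
    schattenNorm p (B * C) ≤ ‖B‖ * schattenNorm p C := by
  have h := schattenNorm_mul_mul_le p B C (1 : Matrix n n 𝕜)
  rw [Matrix.mul_one] at h
  exact h.trans (mul_le_of_le_one_right
    (mul_nonneg (norm_nonneg _) (schattenNorm_nonneg p C)) l2_opNorm_one_le)

lemma schattenNorm_mul_le_right [DecidableEq r] (C : Matrix m n 𝕜) (D : Matrix n r 𝕜) :
    schattenNorm p (C * D) ≤ schattenNorm p C * ‖D‖ := by
  classical
  have h := schattenNorm_mul_mul_le p (1 : Matrix m m 𝕜) C D
  rw [Matrix.one_mul] at h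
  exact h.trans (mul_le_mul_of_nonneg_right
    (mul_le_of_le_one_left (schattenNorm_nonneg p C) l2_opNorm_one_le) (norm_nonneg _))

lemma schattenNorm_conjTranspose_le [DecidableEq m] (M : Matrix m n 𝕜) :
    schattenNorm p Mᴴ ≤ schattenNorm p M := by
  obtain ⟨W, Z, hW, hZ, hM⟩ := exists_norm_diag_eq_schattenNorm p Mᴴ
  have hdiag : ‖WithLp.toLp p (Wᴴ * Mᴴ * Z).diag‖ = ‖WithLp.toLp p (Zᴴ * M * W).diag‖ := by
    refine norm_toLp_congr fun i => ?_
    rw [← norm_star, diag_apply, diag_apply, ← conjTranspose_apply]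
    simp only [conjTranspose_mul, conjTranspose_conjTranspose, Matrix.mul_assoc]
  have := schattenNorm_nonneg p M
  calc schattenNorm p Mᴴ ≤ ‖Zᴴ‖ * schattenNorm p M * ‖W‖ :=
        (hM.trans hdiag).trans_le (norm_diag_mul_mul_le p _ _ _)
    _ ≤ 1 * schattenNorm p M * 1 := by rw [l2_opNorm_conjTranspose]; gcongr
    _ = schattenNorm p M := by ring

lemma schattenNorm_conjTranspose [DecidableEq m] (M : Matrix m n 𝕜) :
    schattenNorm p Mᴴ = schattenNorm p M :=
  (schattenNorm_conjTranspose_le p M).antisymm <| by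
    simpa only [conjTranspose_conjTranspose] using schattenNorm_conjTranspose_le p Mᴴ

lemma mul_schattenNorm_le_schattenNorm_mul (N : Matrix m n 𝕜) {S : Matrix n n 𝕜} (hS : IsUnit S)
    {s : ℝ} (hs : 0 ≤ s) (hsS : s * ‖S⁻¹‖ ≤ 1) :
    s * schattenNorm p N ≤ schattenNorm p (N * S) := by
  have hN : N = N * S * S⁻¹ := by
    rw [mul_nonsing_inv_cancel_right _ _ ((isUnit_iff_isUnit_det S).1 hS)]
  calc s * schattenNorm p N = s * schattenNorm p (N * S * S⁻¹) := by rw [← hN]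
    _ ≤ s * (schattenNorm p (N * S) * ‖S⁻¹‖) := by gcongr; exact schattenNorm_mul_le_right p _ _
    _ = (s * ‖S⁻¹‖) * schattenNorm p (N * S) := by ring
    _ ≤ schattenNorm p (N * S) := mul_le_of_le_one_left (schattenNorm_nonneg p _) hsS

end Schatten

section SortedSingularValues

variable {m n : ℕ}

lemma sum_range_length_getD {α M : Type*} [AddCommMonoid M] (l : List α) (d : α) (f : α → M) :
    ∑ j ∈ Finset.range l.length, f (l.getD j d) = (l.map f).sum := by
  rw [Finset.sum_range, ← List.sum_ofFn]
  congr 1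
  apply List.ext_getElem <;> simp

lemma getD_zero_insertionSort_ofFn {x : Fin n → ℝ} (hx : ∀ i, 0 ≤ x i) :
    (List.insertionSort (· ≥ ·) (List.ofFn x)).getD 0 0 = ‖x‖ := by
  have hsorted := List.pairwise_insertionSort (· ≥ ·) (List.ofFn x)
  have hmem (a : ℝ) : a ∈ List.insertionSort (· ≥ ·) (List.ofFn x) ↔ ∃ i, x i = a := by
    rw [List.mem_insertionSort, List.mem_ofFn]
  generalize List.insertionSort (· ≥ ·) (List.ofFn x) = l at hsorted hmem
  cases l with
  | nil =>
    have : IsEmpty (Fin n) := ⟨fun i => List.not_mem_nil ((hmem _).2 ⟨i, rfl⟩)⟩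
    rw [List.getD_nil, Subsingleton.elim x 0, norm_zero]
  | cons a l =>
    obtain ⟨i, rfl⟩ := (hmem a).1 List.mem_cons_self
    rw [List.getD_cons_zero]
    refine ((le_abs_self _).trans (norm_le_pi_norm x i)).antisymm ?_
    refine (pi_norm_le_iff_of_nonneg (hx i)).2 fun j => ?_
    rw [Real.norm_of_nonneg (hx j)]
    rcases List.mem_cons.1 ((hmem _).2 ⟨j, rfl⟩) with h | h
    · exact h.le
    · exact (List.pairwise_cons.1 hsorted).1 _ h

lemma sval_eq_getD (M : Matrix (Fin m) (Fin n) ℂ) (j : ℕ) :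
    sval M j = (List.insertionSort (· ≥ ·) (List.ofFn (singVal M))).getD j 0 := by
  rw [sval, List.map_ofFn]
  rfl

lemma sum_sval (M : Matrix (Fin m) (Fin n) ℂ) (f : ℝ → ℝ) :
    ∑ j ∈ Finset.range n, f (sval M j) = ∑ i, f (singVal M i) := by
  have hlength : (List.insertionSort (· ≥ ·) (List.ofFn (singVal M))).length = n := by simp
  have hsum := sum_range_length_getD (List.insertionSort (· ≥ ·) (List.ofFn (singVal M))) 0 f
  rw [hlength, ((List.perm_insertionSort _ _).map f).sum_eq, List.map_ofFn, List.sum_ofFn] at hsum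
  simpa only [sval_eq_getD, Function.comp_apply] using hsum

lemma sval_zero (M : Matrix (Fin m) (Fin n) ℂ) : sval M 0 = ‖M‖ := by
  rw [sval_eq_getD, getD_zero_insertionSort_ofFn (singVal_nonneg M), norm_singVal]

lemma schatten_eq_schattenNorm (p : ℝ≥0∞) [Fact (1 ≤ p)] (M : Matrix (Fin m) (Fin n) ℂ) :
    schatten p M = schattenNorm p M := by
  rw [schatten, schattenNorm]
  split_ifs with hp
  · subst hp
    rw [PiLp.norm_toLp, sval_zero, norm_singVal]
  · have hp0 : 0 < p.toReal := ENNReal.toReal_pos (zero_lt_one.trans_le Fact.out).ne' hp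
    rw [PiLp.norm_eq_sum hp0, sum_sval M (· ^ p.toReal)]
    simp only [Real.norm_of_nonneg (singVal_nonneg M _)]

end SortedSingularValues

section BlockSVD

variable {𝕜 m n r k c d e : Type*} [RCLike 𝕜] [Fintype m] [DecidableEq k] [DecidableEq c]
  [DecidableEq d] [DecidableEq e]

/-- The columns of `X` and `Y` together form an orthonormal family, as do the leading and trailing
columns of a matrix with orthonormal columns. -/
structure OrthonormalBlocks (X : Matrix m k 𝕜) (Y : Matrix m c 𝕜) : Prop where
  left : Xᴴ * X = 1
  right : Yᴴ * Y = 1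
  left_right : Xᴴ * Y = 0

lemma OrthonormalBlocks.right_left {X : Matrix m k 𝕜} {Y : Matrix m c 𝕜}
    (h : OrthonormalBlocks X Y) : Yᴴ * X = 0 := by
  simpa using congr_arg conjTranspose h.left_right

variable [Fintype n] [Fintype r] [Fintype k] [Fintype c] [Fintype d] [Fintype e]

/-- The two-block form `A = U₁ S₁ V₁ᴴ + U₂ S₂ V₂ᴴ` of a singular value decomposition, split into
leading and trailing singular triplets. The blocks `S₁` and `S₂` need not be diagonal, so that such
forms are stable under products and adjoints. -/
structure IsBlockSVD (A : Matrix m n 𝕜) (U₁ : Matrix m k 𝕜) (S₁ : Matrix k k 𝕜) (V₁ : Matrix n k 𝕜)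
    (U₂ : Matrix m c 𝕜) (S₂ : Matrix c d 𝕜) (V₂ : Matrix n d 𝕜) : Prop where
  left : OrthonormalBlocks U₁ U₂
  right : OrthonormalBlocks V₁ V₂
  eq : A = U₁ * S₁ * V₁ᴴ + U₂ * S₂ * V₂ᴴ

namespace IsBlockSVD

variable {A : Matrix m n 𝕜} {U₁ : Matrix m k 𝕜} {S₁ : Matrix k k 𝕜} {V₁ : Matrix n k 𝕜}
  {U₂ : Matrix m c 𝕜} {S₂ : Matrix c d 𝕜} {V₂ : Matrix n d 𝕜}

lemma conjTranspose (h : IsBlockSVD A U₁ S₁ V₁ U₂ S₂ V₂) :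
    IsBlockSVD Aᴴ V₁ S₁ᴴ U₁ V₂ S₂ᴴ U₂ where
  left := h.right
  right := h.left
  eq := by
    simp only [h.eq, conjTranspose_add, conjTranspose_mul, conjTranspose_conjTranspose,
      Matrix.mul_assoc]

lemma mul_left_block (h : IsBlockSVD A U₁ S₁ V₁ U₂ S₂ V₂) : A * V₁ = U₁ * S₁ := by
  rw [h.eq, Matrix.add_mul, Matrix.mul_assoc _ V₁ᴴ, Matrix.mul_assoc _ V₂ᴴ, h.right.left,
    h.right.right_left, Matrix.mul_one, Matrix.mul_zero, add_zero]

lemma mul_right_block (h : IsBlockSVD A U₁ S₁ V₁ U₂ S₂ V₂) : A * V₂ = U₂ * S₂ := by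
  rw [h.eq, Matrix.add_mul, Matrix.mul_assoc _ V₁ᴴ, Matrix.mul_assoc _ V₂ᴴ, h.right.left_right,
    h.right.right, Matrix.mul_one, Matrix.mul_zero, zero_add]

lemma mul {B : Matrix n r 𝕜} {T₁ : Matrix k k 𝕜} {W₁ : Matrix r k 𝕜} {T₂ : Matrix d e 𝕜}
    {W₂ : Matrix r e 𝕜} (hA : IsBlockSVD A U₁ S₁ V₁ U₂ S₂ V₂)
    (hB : IsBlockSVD B V₁ T₁ W₁ V₂ T₂ W₂) :
    IsBlockSVD (A * B) U₁ (S₁ * T₁) W₁ U₂ (S₂ * T₂) W₂ where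
  left := hA.left
  right := hB.right
  eq := by
    rw [hB.eq, Matrix.mul_add]
    simp only [← Matrix.mul_assoc, hA.mul_left_block, hA.mul_right_block]

lemma mul_pow [DecidableEq n] (h : IsBlockSVD A U₁ S₁ V₁ U₂ S₂ V₂) (q : ℕ) :
    IsBlockSVD (A * (Aᴴ * A) ^ q) U₁ (S₁ * (S₁ᴴ * S₁) ^ q) V₁ U₂ (S₂ * (S₂ᴴ * S₂) ^ q) V₂ := by
  induction q with
  | zero => simpa only [pow_zero, Matrix.mul_one] using h
  | succ q ih =>
    simp only [pow_succ, ← Matrix.mul_assoc _ (_ ^ q)]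
    exact ih.mul (h.conjTranspose.mul h)

lemma one_sub_mul [DecidableEq m] (h : IsBlockSVD A U₁ S₁ V₁ U₂ S₂ V₂) :
    (1 - U₁ * U₁ᴴ) * A = U₂ * S₂ * V₂ᴴ := by
  have hU₂ : (1 - U₁ * U₁ᴴ) * U₂ = U₂ := by
    rw [Matrix.sub_mul, Matrix.mul_assoc, h.left.left_right, Matrix.one_mul, Matrix.mul_zero,
      sub_zero]
  rw [h.eq, Matrix.mul_add]
  simp only [← Matrix.mul_assoc, one_sub_mul_conjTranspose_mul_self h.left.left, hU₂,
    Matrix.zero_mul, zero_add]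

end IsBlockSVD

variable {κ γ δ : Type*} [Fintype κ] [Fintype γ] [Fintype δ] [DecidableEq κ] [DecidableEq γ]
  [DecidableEq δ] [DecidableEq m] [DecidableEq n] (p : ℝ≥0∞) [Fact (1 ≤ p)]
  {A B : Matrix m n 𝕜} {U₁ : Matrix m k 𝕜} {S₁ : Matrix k k 𝕜} {V₁ : Matrix n k 𝕜}
  {U₂ : Matrix m c 𝕜} {S₂ : Matrix c d 𝕜} {V₂ : Matrix n d 𝕜}
  {X₁ : Matrix m κ 𝕜} {T₁ : Matrix κ κ 𝕜} {Y₁ : Matrix n κ 𝕜}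
  {X₂ : Matrix m γ 𝕜} {T₂ : Matrix γ δ 𝕜} {Y₂ : Matrix n δ 𝕜}

lemma IsBlockSVD.schattenNorm_left_sine_le (hA : IsBlockSVD A U₁ S₁ V₁ U₂ S₂ V₂)
    (hB : IsBlockSVD B X₁ T₁ Y₁ X₂ T₂ Y₂) (hS₁ : IsUnit S₁) {s : ℝ} (hs : 0 ≤ s)
    (hsS₁ : s * ‖S₁⁻¹‖ ≤ 1) :
    s * schattenNorm p ((1 - X₁ * X₁ᴴ) * U₁) ≤
      ‖T₂‖ * schattenNorm p ((1 - Y₁ * Y₁ᴴ) * V₁) + schattenNorm p ((A - B) * V₁) := by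
  have hT₂ : Y₂ᴴ * V₁ = Y₂ᴴ * ((1 - Y₁ * Y₁ᴴ) * V₁) := by
    rw [← Matrix.mul_assoc, Matrix.mul_sub, Matrix.mul_one, ← Matrix.mul_assoc,
      hB.right.right_left, Matrix.zero_mul, sub_zero]
  have hsplit : (1 - X₁ * X₁ᴴ) * U₁ * S₁ =
      X₂ * T₂ * Y₂ᴴ * ((1 - Y₁ * Y₁ᴴ) * V₁) + (1 - X₁ * X₁ᴴ) * ((A - B) * V₁) := by
    rw [Matrix.mul_assoc (X₂ * T₂), ← hT₂, ← Matrix.mul_assoc (X₂ * T₂), ← hB.one_sub_mul,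
      Matrix.mul_assoc _ B, ← Matrix.mul_add, ← Matrix.add_mul, add_sub_cancel,
      hA.mul_left_block, Matrix.mul_assoc]
  have hproj : ‖1 - X₁ * X₁ᴴ‖ ≤ 1 :=
    (isStarProjection_one_sub_mul_conjTranspose hB.left.left).norm_le _
  calc s * schattenNorm p ((1 - X₁ * X₁ᴴ) * U₁)
      ≤ schattenNorm p ((1 - X₁ * X₁ᴴ) * U₁ * S₁) :=
        mul_schattenNorm_le_schattenNorm_mul p _ hS₁ hs hsS₁
    _ ≤ schattenNorm p (X₂ * T₂ * Y₂ᴴ * ((1 - Y₁ * Y₁ᴴ) * V₁)) +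
          schattenNorm p ((1 - X₁ * X₁ᴴ) * ((A - B) * V₁)) :=
        hsplit ▸ schattenNorm_add_le p _ _
    _ ≤ ‖T₂‖ * schattenNorm p ((1 - Y₁ * Y₁ᴴ) * V₁) + schattenNorm p ((A - B) * V₁) := by
        refine add_le_add ((schattenNorm_mul_le_left p _ _).trans ?_)
          ((schattenNorm_mul_le_left p _ _).trans
            (mul_le_of_le_one_left (schattenNorm_nonneg p _) hproj))
        refine mul_le_mul_of_nonneg_right (l2_opNorm_mul_mul_le_of_le_one ?_ ?_)
          (schattenNorm_nonneg p _)
        · exact l2_opNorm_le_one_of_conjTranspose_mul_self hB.left.right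
        · rw [l2_opNorm_conjTranspose]
          exact l2_opNorm_le_one_of_conjTranspose_mul_self hB.right.right

/-- Wedin's `sin Θ` theorem. -/
theorem IsBlockSVD.max_schattenNorm_sine_le (hA : IsBlockSVD A U₁ S₁ V₁ U₂ S₂ V₂)
    (hB : IsBlockSVD B X₁ T₁ Y₁ X₂ T₂ Y₂) (hS₁ : IsUnit S₁) {s ε : ℝ} (hsT₂ : ‖T₂‖ < s)
    (hsS₁ : s * ‖S₁⁻¹‖ ≤ 1) (hV₁ : schattenNorm p ((A - B) * V₁) ≤ ε)
    (hU₁ : schattenNorm p ((A - B)ᴴ * U₁) ≤ ε) :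
    max (schattenNorm p ((1 - X₁ * X₁ᴴ) * U₁)) (schattenNorm p ((1 - Y₁ * Y₁ᴴ) * V₁)) ≤
      ε / (s - ‖T₂‖) := by
  have hs : 0 ≤ s := (norm_nonneg T₂).trans hsT₂.le
  have hleft := hA.schattenNorm_left_sine_le p hB hS₁ hs hsS₁
  have hright := hA.conjTranspose.schattenNorm_left_sine_le p hB.conjTranspose hS₁.star hs
    (by rwa [← conjTranspose_nonsing_inv, l2_opNorm_conjTranspose])
  rw [l2_opNorm_conjTranspose, ← conjTranspose_sub] at hright
  rw [le_div_iff₀' (sub_pos.2 hsT₂), sub_mul]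
  rcases max_cases (schattenNorm p ((1 - X₁ * X₁ᴴ) * U₁))
    (schattenNorm p ((1 - Y₁ * Y₁ᴴ) * V₁)) with ⟨hmax, hle⟩ | ⟨hmax, hle⟩
  · rw [hmax]
    linarith [mul_le_mul_of_nonneg_left hle (norm_nonneg T₂)]
  · rw [hmax]
    linarith [mul_le_mul_of_nonneg_left hle.le (norm_nonneg T₂)]

end BlockSVD

section SubspaceIteration

variable {𝕜 m n k c d e : Type*} [RCLike 𝕜] [Fintype m] [Fintype n] [Fintype k] [Fintype c]
  [Fintype d] [Fintype e] [DecidableEq k] [DecidableEq c] [DecidableEq d]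

lemma mul_conjTranspose_self_pow_mul [DecidableEq m] [DecidableEq n] (S : Matrix m n 𝕜) (q : ℕ) :
    (S * Sᴴ) ^ q * S = S * (Sᴴ * S) ^ q := by
  induction q with
  | zero => simp only [pow_zero, Matrix.one_mul, Matrix.mul_one]
  | succ q ih =>
    rw [pow_succ', pow_succ, Matrix.mul_assoc, ih, ← Matrix.mul_assoc S]
    simp only [Matrix.mul_assoc]
    rw [← Matrix.mul_assoc Sᴴ, ← pow_succ', pow_succ]

lemma l2_opNorm_conjTranspose_mul_self_pow_le [DecidableEq n] (S : Matrix m n 𝕜) (q : ℕ) :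
    ‖(Sᴴ * S) ^ q‖ ≤ ‖S‖ ^ (2 * q) := by
  rcases q.eq_zero_or_pos with rfl | hq
  · simpa only [mul_zero, pow_zero] using l2_opNorm_one_le
  · rw [pow_mul, sq, ← l2_opNorm_conjTranspose_mul_self]
    exact norm_pow_le' _ hq

lemma conjTranspose_mul_self_pow_mul_inv_pow [DecidableEq n] {S : Matrix n n 𝕜} (hS : IsUnit S)
    (q : ℕ) :
    (Sᴴ * S) ^ q * (S⁻¹ * S⁻¹ᴴ) ^ q = 1 := by
  have hdet := (isUnit_iff_isUnit_det S).1 hS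
  refine pow_mul_pow_eq_one q ?_
  rw [Matrix.mul_assoc, mul_nonsing_inv_cancel_left _ _ hdet, ← conjTranspose_mul,
    nonsing_inv_mul _ hdet, conjTranspose_one]

lemma mul_sqrt_one_add_sq_le {x y : ℝ} (hx : 0 ≤ x) (hx1 : x ≤ 1) (hxy : x ≤ y) :
    x * √(1 + y ^ 2) ≤ √2 * y := by
  have hy : 0 ≤ y := hx.trans hxy
  rcases le_total y 1 with hy1 | hy1
  · rw [mul_comm]
    gcongr
    nlinarith
  · calc x * √(1 + y ^ 2) ≤ 1 * √(2 * y ^ 2) := by gcongr; nlinarith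
      _ = √2 * y := by rw [one_mul, Real.sqrt_mul zero_le_two, Real.sqrt_sq hy]

lemma OrthonormalBlocks.l2_opNorm_sub_mul_le {X : Matrix m k 𝕜} {Y : Matrix m c 𝕜}
    (h : OrthonormalBlocks X Y) (K : Matrix k c 𝕜) : ‖Y - X * K‖ ≤ √(1 + ‖K‖ ^ 2) := by
  have hgram : (Y - X * K)ᴴ * (Y - X * K) = 1 + Kᴴ * K := by
    rw [conjTranspose_sub, conjTranspose_mul, Matrix.sub_mul, Matrix.mul_sub, Matrix.mul_sub,
      ← Matrix.mul_assoc Yᴴ, h.right_left, h.right, Matrix.mul_assoc Kᴴ, h.left_right,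
      Matrix.mul_assoc Kᴴ, ← Matrix.mul_assoc Xᴴ, h.left]
    simp
  refine Real.le_sqrt_of_sq_le ?_
  rw [sq, sq, ← l2_opNorm_conjTranspose_mul_self, ← l2_opNorm_conjTranspose_mul_self, hgram]
  exact (norm_add_le _ _).trans (by gcongr; exact l2_opNorm_one_le)

namespace IsBlockSVD

variable {A : Matrix m n 𝕜} {U₁ : Matrix m k 𝕜} {S₁ : Matrix k k 𝕜} {V₁ : Matrix n k 𝕜}
  {U₂ : Matrix m c 𝕜} {S₂ : Matrix c d 𝕜} {V₂ : Matrix n d 𝕜}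

lemma exists_mul_pow_mul_eq [DecidableEq n] {Ω : Matrix n e 𝕜} {G : Matrix e k 𝕜}
    (h : IsBlockSVD A U₁ S₁ V₁ U₂ S₂ V₂) (hS₁ : IsUnit S₁) (hG : V₁ᴴ * Ω * G = 1) (q : ℕ) :
    ∃ (L : Matrix d k 𝕜) (H : Matrix e k 𝕜),
      ‖L‖ ≤ (‖S₂‖ * ‖S₁⁻¹‖) ^ (2 * q) * ‖V₂ᴴ * Ω * G‖ ∧
      A * (Aᴴ * A) ^ q * Ω * H = A * (V₁ + V₂ * L) := by
  let J := (S₁⁻¹ * S₁⁻¹ᴴ) ^ q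
  have hJ : ‖J‖ ≤ ‖S₁⁻¹‖ ^ (2 * q) := by
    simpa only [conjTranspose_conjTranspose, l2_opNorm_conjTranspose] using
      l2_opNorm_conjTranspose_mul_self_pow_le S₁⁻¹ᴴ q
  refine ⟨(S₂ᴴ * S₂) ^ q * (V₂ᴴ * Ω * G) * J, G * J, ?_, ?_⟩
  · calc ‖(S₂ᴴ * S₂) ^ q * (V₂ᴴ * Ω * G) * J‖
        ≤ ‖(S₂ᴴ * S₂) ^ q‖ * ‖V₂ᴴ * Ω * G‖ * ‖J‖ :=
          (l2_opNorm_mul _ _).trans (by gcongr; exact l2_opNorm_mul _ _)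
      _ ≤ ‖S₂‖ ^ (2 * q) * ‖V₂ᴴ * Ω * G‖ * ‖S₁⁻¹‖ ^ (2 * q) := by
          gcongr
          exact l2_opNorm_conjTranspose_mul_self_pow_le S₂ q
      _ = (‖S₂‖ * ‖S₁⁻¹‖) ^ (2 * q) * ‖V₂ᴴ * Ω * G‖ := by ring
  · calc A * (Aᴴ * A) ^ q * Ω * (G * J)
        = U₁ * S₁ * ((S₁ᴴ * S₁) ^ q * (V₁ᴴ * Ω * G) * J) +
          U₂ * S₂ * ((S₂ᴴ * S₂) ^ q * (V₂ᴴ * Ω * G) * J) := by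
          simp only [(h.mul_pow q).eq, Matrix.add_mul, Matrix.mul_assoc]
      _ = A * (V₁ + V₂ * ((S₂ᴴ * S₂) ^ q * (V₂ᴴ * Ω * G) * J)) := by
          rw [hG, Matrix.mul_one, conjTranspose_mul_self_pow_mul_inv_pow hS₁, Matrix.mul_one,
            Matrix.mul_add, ← Matrix.mul_assoc A, h.mul_left_block, h.mul_right_block]

variable {P : Matrix m m 𝕜} {L : Matrix d k 𝕜}

lemma mul_left_block_of_mul_eq_zero (h : IsBlockSVD A U₁ S₁ V₁ U₂ S₂ V₂)
    (hPL : P * A * (V₁ + V₂ * L) = 0) : P * A * V₁ = -(P * U₂ * S₂ * L) := by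
  rw [Matrix.mul_add, ← Matrix.mul_assoc, Matrix.mul_assoc P A V₂, h.mul_right_block,
    ← Matrix.mul_assoc P] at hPL
  exact eq_neg_of_add_eq_zero_left hPL

lemma mul_eq_of_mul_eq_zero (h : IsBlockSVD A U₁ S₁ V₁ U₂ S₂ V₂)
    (hPL : P * A * (V₁ + V₂ * L) = 0) : P * A = P * U₂ * S₂ * (V₂ - V₁ * Lᴴ)ᴴ := by
  have hPV₁ := h.mul_left_block_of_mul_eq_zero hPL
  rw [Matrix.mul_assoc, h.mul_left_block] at hPV₁
  rw [h.eq, Matrix.mul_add, ← Matrix.mul_assoc, hPV₁, conjTranspose_sub, conjTranspose_mul,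
    conjTranspose_conjTranspose, Matrix.mul_sub, Matrix.neg_mul, neg_add_eq_sub]
  simp only [Matrix.mul_assoc]

lemma l2_opNorm_mul_left_le (h : IsBlockSVD A U₁ S₁ V₁ U₂ S₂ V₂)
    (hS₁ : IsUnit S₁) (hratio : ‖S₂‖ * ‖S₁⁻¹‖ ≤ 1) [DecidableEq m] (hP : ‖P‖ ≤ 1)
    (hPL : P * A * (V₁ + V₂ * L) = 0) : ‖P * U₁‖ ≤ ‖L‖ := by
  have hPV₁ := h.mul_left_block_of_mul_eq_zero hPL
  rw [Matrix.mul_assoc, h.mul_left_block] at hPV₁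
  have hU₂ : ‖U₂‖ ≤ 1 := l2_opNorm_le_one_of_conjTranspose_mul_self h.left.right
  calc ‖P * U₁‖ = ‖P * U₂ * (S₂ * L * S₁⁻¹)‖ := by
        rw [← norm_neg, ← mul_nonsing_inv_cancel_right S₁ (P * U₁)
          ((isUnit_iff_isUnit_det S₁).1 hS₁), Matrix.mul_assoc P, hPV₁]
        simp only [Matrix.neg_mul, neg_neg, Matrix.mul_assoc]
    _ ≤ ‖P‖ * ‖U₂‖ * (‖S₂‖ * ‖L‖ * ‖S₁⁻¹‖) := by
        refine (l2_opNorm_mul _ _).trans (mul_le_mul (l2_opNorm_mul _ _)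
          ((l2_opNorm_mul _ _).trans ?_) (norm_nonneg _) (by positivity))
        gcongr
        exact l2_opNorm_mul _ _
    _ ≤ 1 * 1 * (‖S₂‖ * ‖L‖ * ‖S₁⁻¹‖) := by gcongr
    _ = (‖S₂‖ * ‖S₁⁻¹‖) * ‖L‖ := by ring
    _ ≤ ‖L‖ := mul_le_of_le_one_left (norm_nonneg _) hratio

variable (p : ℝ≥0∞) [Fact (1 ≤ p)]

lemma schattenNorm_mul_left_le [DecidableEq m] (h : IsBlockSVD A U₁ S₁ V₁ U₂ S₂ V₂)
    (hP : ‖P‖ ≤ 1) (hPL : P * A * (V₁ + V₂ * L) = 0) :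
    schattenNorm p (P * A * V₁) ≤ schattenNorm p S₂ * ‖L‖ := by
  have hPU₂ : ‖P * U₂‖ ≤ 1 := (l2_opNorm_mul _ _).trans (mul_le_one₀ hP (norm_nonneg _)
    (l2_opNorm_le_one_of_conjTranspose_mul_self h.left.right))
  rw [h.mul_left_block_of_mul_eq_zero hPL, ← Matrix.neg_mul, ← Matrix.neg_mul]
  refine (schattenNorm_mul_mul_le p _ _ _).trans ?_
  rw [norm_neg]
  exact mul_le_mul_of_nonneg_right (mul_le_of_le_one_left (schattenNorm_nonneg p _) hPU₂)
    (norm_nonneg _)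

lemma schattenNorm_conjTranspose_mul_left_le (h : IsBlockSVD A U₁ S₁ V₁ U₂ S₂ V₂)
    (hS₁ : IsUnit S₁) (hratio : ‖S₂‖ * ‖S₁⁻¹‖ ≤ 1) (hP : IsStarProjection P)
    (hPL : P * A * (V₁ + V₂ * L) = 0) :
    schattenNorm p ((P * A)ᴴ * U₁) ≤ √2 * ‖L‖ * schattenNorm p S₂ := by
  classical
  have hU₁ : ‖U₁‖ ≤ 1 := l2_opNorm_le_one_of_conjTranspose_mul_self h.left.left
  have hU₂ : ‖U₂‖ ≤ 1 := l2_opNorm_le_one_of_conjTranspose_mul_self h.left.right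
  have hPU₁ : ‖P * U₁‖ ≤ ‖L‖ := h.l2_opNorm_mul_left_le hS₁ hratio (hP.norm_le _) hPL
  have hPU₁_one : ‖P * U₁‖ ≤ 1 :=
    (l2_opNorm_mul _ _).trans (mul_le_one₀ (hP.norm_le _) (norm_nonneg _) hU₁)
  have hN : ‖(P * U₁)ᴴ * U₂‖ ≤ ‖P * U₁‖ := (l2_opNorm_mul _ _).trans <| by
    rw [l2_opNorm_conjTranspose]
    exact mul_le_of_le_one_right (norm_nonneg _) hU₂
  have hF : ‖(V₂ - V₁ * Lᴴ)ᴴ‖ ≤ √(1 + ‖L‖ ^ 2) := by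
    simpa only [l2_opNorm_conjTranspose] using h.right.l2_opNorm_sub_mul_le Lᴴ
  have hnonneg := schattenNorm_nonneg p S₂
  calc schattenNorm p ((P * A)ᴴ * U₁)
      = schattenNorm p ((P * U₁)ᴴ * U₂ * S₂ * (V₂ - V₁ * Lᴴ)ᴴ) := by
        rw [← schattenNorm_conjTranspose, conjTranspose_mul, conjTranspose_conjTranspose,
          h.mul_eq_of_mul_eq_zero hPL, conjTranspose_mul P, hP.isSelfAdjoint.isHermitian.eq]
        simp only [Matrix.mul_assoc]
    _ ≤ ‖(P * U₁)ᴴ * U₂‖ * schattenNorm p S₂ * ‖(V₂ - V₁ * Lᴴ)ᴴ‖ := schattenNorm_mul_mul_le p _ _ _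
    _ ≤ ‖P * U₁‖ * schattenNorm p S₂ * √(1 + ‖L‖ ^ 2) := by gcongr
    _ = ‖P * U₁‖ * √(1 + ‖L‖ ^ 2) * schattenNorm p S₂ := by ring
    _ ≤ √2 * ‖L‖ * schattenNorm p S₂ := by
        exact mul_le_mul_of_nonneg_right
          (mul_sqrt_one_add_sq_le (norm_nonneg _) hPU₁_one hPU₁) hnonneg

end IsBlockSVD

variable {κ γ δ l : Type*} [Fintype κ] [Fintype γ] [Fintype δ] [Fintype l] [DecidableEq κ]
  [DecidableEq γ] [DecidableEq δ] [DecidableEq l] [DecidableEq m] [DecidableEq n] (p : ℝ≥0∞)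
  [Fact (1 ≤ p)] {A : Matrix m n 𝕜} {U₁ : Matrix m k 𝕜} {S₁ : Matrix k k 𝕜} {V₁ : Matrix n k 𝕜}
  {U₂ : Matrix m c 𝕜} {S₂ : Matrix c d 𝕜} {V₂ : Matrix n d 𝕜}
  {X₁ : Matrix m κ 𝕜} {T₁ : Matrix κ κ 𝕜} {Y₁ : Matrix n κ 𝕜}
  {X₂ : Matrix m γ 𝕜} {T₂ : Matrix γ δ 𝕜} {Y₂ : Matrix n δ 𝕜}
  {Q : Matrix m l 𝕜}

lemma IsBlockSVD.max_schattenNorm_sine_le_of_mul_eq_zero {L : Matrix d k 𝕜} {s t : ℝ}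
    (hA : IsBlockSVD A U₁ S₁ V₁ U₂ S₂ V₂) (hB : IsBlockSVD (Q * Qᴴ * A) X₁ T₁ Y₁ X₂ T₂ Y₂)
    (hQ : Qᴴ * Q = 1) (hQL : (1 - Q * Qᴴ) * A * (V₁ + V₂ * L) = 0) (hS₁ : IsUnit S₁)
    (hsS₁ : s * ‖S₁⁻¹‖ ≤ 1) (hratio : ‖S₂‖ * ‖S₁⁻¹‖ ≤ 1) (hT₂ : ‖T₂‖ ≤ t) (hts : t < s) :
    max (schattenNorm p ((1 - X₁ * X₁ᴴ) * U₁)) (schattenNorm p ((1 - Y₁ * Y₁ᴴ) * V₁)) ≤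
      √2 * ‖L‖ * schattenNorm p S₂ / (s - t) := by
  have hP := isStarProjection_one_sub_mul_conjTranspose hQ
  have hS₂ := schattenNorm_nonneg p S₂
  have hAB : A - Q * Qᴴ * A = (1 - Q * Qᴴ) * A := by rw [Matrix.sub_mul, Matrix.one_mul]
  have hV₁ : schattenNorm p ((A - Q * Qᴴ * A) * V₁) ≤ √2 * ‖L‖ * schattenNorm p S₂ := by
    rw [hAB]
    calc schattenNorm p ((1 - Q * Qᴴ) * A * V₁) ≤ 1 * (schattenNorm p S₂ * ‖L‖) :=
          (hA.schattenNorm_mul_left_le p (hP.norm_le _) hQL).trans_eq (one_mul _).symm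
      _ ≤ √2 * (schattenNorm p S₂ * ‖L‖) := by
          gcongr
          exact Real.one_le_sqrt.2 one_le_two
      _ = √2 * ‖L‖ * schattenNorm p S₂ := by ring
  have hU₁ : schattenNorm p ((A - Q * Qᴴ * A)ᴴ * U₁) ≤ √2 * ‖L‖ * schattenNorm p S₂ :=
    hAB ▸ hA.schattenNorm_conjTranspose_mul_left_le p hS₁ hratio hP hQL
  refine (hA.max_schattenNorm_sine_le p hB hS₁ (hT₂.trans_lt hts) hsS₁ hV₁ hU₁).trans ?_
  have := sub_pos.2 hts
  gcongr

theorem IsBlockSVD.max_schattenNorm_sine_le_of_iterate {Ω : Matrix n e 𝕜} {G : Matrix e k 𝕜}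
    {R : Matrix l e 𝕜} {q : ℕ} {s t : ℝ}
    (hA : IsBlockSVD A U₁ S₁ V₁ U₂ S₂ V₂) (hB : IsBlockSVD (Q * Qᴴ * A) X₁ T₁ Y₁ X₂ T₂ Y₂)
    (hQ : Qᴴ * Q = 1) (hQR : (A * Aᴴ) ^ q * A * Ω = Q * R) (hG : V₁ᴴ * Ω * G = 1)
    (hS₁ : IsUnit S₁) (hsS₁ : s * ‖S₁⁻¹‖ ≤ 1) (hS₂ : ‖S₂‖ ≤ t) (hT₂ : ‖T₂‖ ≤ t) (hts : t < s) :
    max (schattenNorm p ((1 - X₁ * X₁ᴴ) * U₁)) (schattenNorm p ((1 - Y₁ * Y₁ᴴ) * V₁)) ≤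
      √2 * ((t / s) ^ (2 * q) / (1 - t / s)) * (schattenNorm p S₂ / s) * ‖V₂ᴴ * Ω * G‖ := by
  have ht : 0 ≤ t := (norm_nonneg _).trans hS₂
  have hs : 0 < s := ht.trans_lt hts
  have hratio : ‖S₂‖ * ‖S₁⁻¹‖ ≤ t / s := by
    rw [div_eq_mul_one_div]
    gcongr
    rwa [le_div_iff₀' hs]
  obtain ⟨L, H, hL, hH⟩ := hA.exists_mul_pow_mul_eq hS₁ hG q
  have hQL : (1 - Q * Qᴴ) * A * (V₁ + V₂ * L) = 0 := by
    rw [Matrix.mul_assoc, ← hH, ← mul_conjTranspose_self_pow_mul, hQR, Matrix.mul_assoc Q,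
      ← Matrix.mul_assoc, one_sub_mul_conjTranspose_mul_self hQ, Matrix.zero_mul]
  have hS₂p := schattenNorm_nonneg p S₂
  have hst := sub_pos.2 hts
  calc max (schattenNorm p ((1 - X₁ * X₁ᴴ) * U₁)) (schattenNorm p ((1 - Y₁ * Y₁ᴴ) * V₁))
      ≤ √2 * ‖L‖ * schattenNorm p S₂ / (s - t) :=
        hA.max_schattenNorm_sine_le_of_mul_eq_zero p hB hQ hQL hS₁ hsS₁
          (hratio.trans ((div_le_one hs).2 hts.le)) hT₂ hts
    _ ≤ √2 * ((t / s) ^ (2 * q) * ‖V₂ᴴ * Ω * G‖) * schattenNorm p S₂ / (s - t) := by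
        gcongr
        exact hL.trans (by gcongr)
    _ = √2 * ((t / s) ^ (2 * q) / (1 - t / s)) * (schattenNorm p S₂ / s) * ‖V₂ᴴ * Ω * G‖ := by
        rw [one_sub_div hs.ne']
        field_simp

end SubspaceIteration

section Interlacing

variable {𝕜 l m n k c d κ γ δ : Type*} [RCLike 𝕜] [Fintype l] [Fintype m] [Fintype n] [Fintype k]
  [Fintype c] [Fintype d] [Fintype κ] [Fintype γ] [Fintype δ] [DecidableEq k] [DecidableEq c]
  [DecidableEq d] [DecidableEq κ] [DecidableEq γ] [DecidableEq δ] [DecidableEq m]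
  {A : Matrix m n 𝕜} {U₁ : Matrix m k 𝕜} {S₁ : Matrix k k 𝕜} {V₁ : Matrix n k 𝕜}
  {U₂ : Matrix m c 𝕜} {S₂ : Matrix c d 𝕜} {V₂ : Matrix n d 𝕜}
  {X₁ : Matrix l κ 𝕜} {T₁ : Matrix κ κ 𝕜} {Y₁ : Matrix n κ 𝕜}
  {X₂ : Matrix l γ 𝕜} {T₂ : Matrix γ δ 𝕜} {Y₂ : Matrix n δ 𝕜}

lemma IsBlockSVD.one_le_l2_opNorm_inv_mul_of_card_lt {C : Matrix l m 𝕜}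
    (hA : IsBlockSVD A U₁ S₁ V₁ U₂ S₂ V₂) (hCA : IsBlockSVD (C * A) X₁ T₁ Y₁ X₂ T₂ Y₂)
    (hC : ‖C‖ ≤ 1) (hT₁ : IsUnit T₁) (hcard : Fintype.card k < Fintype.card κ) :
    1 ≤ ‖T₁⁻¹‖ * ‖S₂‖ := by
  classical
  have hsplit : T₁ = X₁ᴴ * C * U₁ * S₁ * (V₁ᴴ * Y₁) + X₁ᴴ * C * U₂ * S₂ * (V₂ᴴ * Y₁) := by
    calc T₁ = X₁ᴴ * (C * A * Y₁) := by
          rw [hCA.mul_left_block, ← Matrix.mul_assoc, hCA.left.left, Matrix.one_mul]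
      _ = _ := by
          rw [hA.eq]
          simp only [Matrix.mul_add, Matrix.add_mul, Matrix.mul_assoc]
  have hleft : ‖X₁ᴴ * C * U₂‖ ≤ 1 := by
    have hX₁ : ‖X₁ᴴ‖ ≤ 1 := by
      rw [l2_opNorm_conjTranspose]
      exact l2_opNorm_le_one_of_conjTranspose_mul_self hCA.left.left
    exact (l2_opNorm_mul_mul_le_of_le_one hX₁
      (l2_opNorm_le_one_of_conjTranspose_mul_self hA.left.right)).trans hC
  have hright : ‖V₂ᴴ * Y₁‖ ≤ 1 := by
    refine (l2_opNorm_mul _ _).trans (mul_le_one₀ ?_ (norm_nonneg _)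
      (l2_opNorm_le_one_of_conjTranspose_mul_self hCA.right.left))
    rw [l2_opNorm_conjTranspose]
    exact l2_opNorm_le_one_of_conjTranspose_mul_self hA.right.right
  calc 1 ≤ ‖T₁⁻¹‖ * ‖X₁ᴴ * C * U₂ * S₂ * (V₂ᴴ * Y₁)‖ :=
        one_le_l2_opNorm_inv_mul_of_eq_mul_add hT₁ hcard hsplit
    _ ≤ ‖T₁⁻¹‖ * ‖S₂‖ := by
        gcongr
        exact l2_opNorm_mul_mul_le_of_le_one hleft hright

end Interlacing

section Columns

variable {a b k c d : ℕ}

lemma orthonormalBlocks_cols {M : Matrix (Fin a) (Fin (k + c)) ℂ} (h : Mᴴ * M = 1) :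
    OrthonormalBlocks (colsL M) (colsR M) := by
  have hgram {x y : ℕ} (f : Fin x → Fin (k + c)) (g : Fin y → Fin (k + c)) :
      (M.submatrix id f)ᴴ * M.submatrix id g = (1 : Matrix _ _ ℂ).submatrix f g := by
    rw [conjTranspose_submatrix, ← submatrix_mul _ _ _ _ _ Function.bijective_id, h]
  refine ⟨(hgram _ _).trans (submatrix_one _ (Fin.castAdd_injective k c)),
    (hgram _ _).trans (submatrix_one _ (Fin.natAdd_injective c k)), (hgram _ _).trans ?_⟩
  ext i j
  refine one_apply_ne (Fin.ne_of_val_ne ?_)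
  rw [Fin.val_castAdd, Fin.val_natAdd]
  omega

lemma isBlockSVD_cols {M : Matrix (Fin a) (Fin (k + c)) ℂ} {N : Matrix (Fin b) (Fin (k + d)) ℂ}
    (hM : Mᴴ * M = 1) (hN : Nᴴ * N = 1) (σ : ℕ → ℝ) :
    IsBlockSVD (M * diagRect σ 0 (k + c) (k + d) * Nᴴ)
      (colsL M) (diagonal fun i : Fin k => (σ i : ℂ)) (colsL N)
      (colsR M) (diagRect σ k c d) (colsR N) where
  left := orthonormalBlocks_cols hM
  right := orthonormalBlocks_cols hN
  eq := by
    have hlr (x : Fin k) (y : ℕ) : (x : ℕ) ≠ k + y := by omega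
    have hrl (x : Fin k) (y : ℕ) : k + y ≠ x := by omega
    ext i j
    simp [mul_apply, Fin.sum_univ_add, diagRect, colsL, colsR, hlr, hrl, diagonal_apply,
      Fin.ext_iff]

lemma l2_opNorm_diagRect_le {σ : ℕ → ℝ} {off : ℕ} {t : ℝ} (ht : 0 ≤ t)
    (h : ∀ i, i < a → i < b → |σ (off + i)| ≤ t) : ‖diagRect σ off a b‖ ≤ t := by
  let v : Fin (max a b) → ℂ := fun i => if i < min a b then (σ (off + i) : ℂ) else 0
  have hpad : diagRect σ off a b = (diagonal v).submatrix (Fin.castLE (le_max_left a b))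
      (Fin.castLE (le_max_right a b)) := by
    ext i j
    by_cases hij : (i : ℕ) = j
    · have hj : (j : ℕ) < a := hij ▸ i.2
      have hdiag : Fin.castLE (le_max_left a b) i = Fin.castLE (le_max_right a b) j := Fin.ext hij
      simp [diagRect, v, hdiag, hij, hj]
    · simp [diagRect, Fin.ext_iff, hij]
  rw [hpad]
  refine (l2_opNorm_submatrix_le _ (Fin.castLE_injective _) (Fin.castLE_injective _)).trans ?_
  rw [l2_opNorm_diagonal]
  refine (pi_norm_le_iff_of_nonneg ht).2 fun i => ?_
  simp only [v]
  split_ifs with hi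
  · rw [Complex.norm_real]
    exact h i (lt_min_iff.1 hi).1 (lt_min_iff.1 hi).2
  · rwa [norm_zero]

open scoped ComplexOrder in
lemma mul_rpinv {M : Matrix (Fin a) (Fin b) ℂ} (h : M.rank = a) : M * rpinv M = 1 := by
  have hunit : IsUnit (M * Mᴴ) := by
    rw [← rank_self_mul_conjTranspose] at h
    rw [← mulVec_surjective_iff_isUnit]
    exact LinearMap.range_eq_top.1 (Submodule.eq_top_of_finrank_eq (h.trans (by simp)))
  rw [rpinv, ← Matrix.mul_assoc, mul_nonsing_inv _ ((isUnit_iff_isUnit_det _).1 hunit)]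

variable {γ δ μ : Type*} [Fintype γ] [Fintype δ] [Fintype μ] [DecidableEq γ] [DecidableEq δ]
  [DecidableEq μ] {A : Matrix μ (Fin b) ℂ} {U₁ : Matrix μ (Fin k) ℂ}
  {S₁ : Matrix (Fin k) (Fin k) ℂ} {V₁ : Matrix (Fin b) (Fin k) ℂ} {U₂ : Matrix μ γ ℂ}
  {S₂ : Matrix γ δ ℂ} {V₂ : Matrix (Fin b) δ ℂ} {C : Matrix (Fin a) μ ℂ} {τ : ℕ → ℝ}

lemma IsBlockSVD.apply_le_l2_opNorm {l : ℕ} {X : Matrix (Fin a) (Fin l) ℂ}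
    {Y : Matrix (Fin b) (Fin l) ℂ} (hA : IsBlockSVD A U₁ S₁ V₁ U₂ S₂ V₂) (hC : ‖C‖ ≤ 1)
    (hX : Xᴴ * X = 1) (hY : Yᴴ * Y = 1) (hτ : Antitone τ)
    (hCA : C * A = X * diagRect τ 0 l l * Yᴴ) (hl : k < l) : τ k ≤ ‖S₂‖ := by
  rcases le_or_gt (τ k) 0 with hneg | hpos
  · exact hneg.trans (norm_nonneg _)
  obtain ⟨e, rfl⟩ := Nat.exists_eq_add_of_le hl
  have hτk (i : Fin (k + 1)) : τ k ≤ ‖(τ i : ℂ)‖ := by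
    rw [Complex.norm_real]
    exact (hτ (Nat.lt_succ_iff.1 i.2)).trans (le_abs_self _)
  have hone := hA.one_le_l2_opNorm_inv_mul_of_card_lt (hCA ▸ isBlockSVD_cols hX hY τ) hC
    (isUnit_diagonal_of_le_norm hpos hτk) (by simp)
  calc τ k ≤ τ k * (‖(diagonal fun i : Fin (k + 1) => (τ i : ℂ))⁻¹‖ * ‖S₂‖) :=
        le_mul_of_one_le_right hpos.le hone
    _ = τ k * ‖(diagonal fun i : Fin (k + 1) => (τ i : ℂ))⁻¹‖ * ‖S₂‖ := (mul_assoc _ _ _).symm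
    _ ≤ ‖S₂‖ := mul_le_of_le_one_left (norm_nonneg _) (mul_l2_opNorm_inv_diagonal_le_one hpos hτk)

lemma IsBlockSVD.l2_opNorm_diagRect_tail_le {e : ℕ} {X : Matrix (Fin a) (Fin (k + e)) ℂ}
    {Y : Matrix (Fin b) (Fin (k + e)) ℂ} (hA : IsBlockSVD A U₁ S₁ V₁ U₂ S₂ V₂) (hC : ‖C‖ ≤ 1)
    (hX : Xᴴ * X = 1) (hY : Yᴴ * Y = 1) (hτ : Antitone τ) (hτ0 : ∀ i, 0 ≤ τ i)
    (hCA : C * A = X * diagRect τ 0 (k + e) (k + e) * Yᴴ) : ‖diagRect τ k e e‖ ≤ ‖S₂‖ :=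
  l2_opNorm_diagRect_le (norm_nonneg _) fun i hi _ => by
    rw [abs_of_nonneg (hτ0 _)]
    exact (hτ (Nat.le_add_right k i)).trans (hA.apply_le_l2_opNorm hC hX hY hτ hCA (by omega))

end Columns

theorem schatten_angles_truncated_general {m n k c d ρ l r : ℕ} (q : ℕ)
    (A : Matrix (Fin m) (Fin n) ℂ)
    (U : Matrix (Fin m) (Fin (k + c)) ℂ) (V : Matrix (Fin n) (Fin (k + d)) ℂ) (σ : ℕ → ℝ)
    (hU : Uᴴ * U = 1) (hV : Vᴴ * V = 1) (hσ0 : ∀ i, 0 ≤ σ i) (hσm : Antitone σ)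
    (hA : A = U * diagRect σ 0 (k + c) (k + d) * Vᴴ) (hgap : σ k < σ (k - 1))
    (Ω : Matrix (Fin n) (Fin r) ℂ) (G : Matrix (Fin r) (Fin k) ℂ) (hG : (colsL V)ᴴ * Ω * G = 1)
    (Q : Matrix (Fin m) (Fin l) ℂ) (R : Matrix (Fin l) (Fin r) ℂ) (hQ : Qᴴ * Q = 1)
    (hQR : (A * Aᴴ) ^ q * A * Ω = Q * R)
    (UB : Matrix (Fin l) (Fin (k + ρ)) ℂ) (Vh : Matrix (Fin n) (Fin (k + ρ)) ℂ) (σh : ℕ → ℝ)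
    (hUB : UBᴴ * UB = 1) (hVh : Vhᴴ * Vh = 1) (hσh0 : ∀ i, 0 ≤ σh i) (hσhm : Antitone σh)
    (hB : Qᴴ * A = UB * diagRect σh 0 (k + ρ) (k + ρ) * Vhᴴ) (p : ℝ≥0∞) (hp : 1 ≤ p) :
    max (schatten p ((1 - colsL (Q * UB) * (colsL (Q * UB))ᴴ) * colsL U))
        (schatten p ((1 - colsL Vh * (colsL Vh)ᴴ) * colsL V)) ≤
      √2 * ((σ k / σ (k - 1)) ^ (2 * q) / (1 - σ k / σ (k - 1))) *
        (schatten p (diagRect σ k c d) / σ (k - 1)) * sval ((colsR V)ᴴ * Ω * G) 0 := by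
  have : Fact (1 ≤ p) := ⟨hp⟩
  have hAσ := hA ▸ isBlockSVD_cols hU hV σ
  have hQUB : (Q * UB)ᴴ * (Q * UB) = 1 := by
    rw [conjTranspose_mul, Matrix.mul_assoc, ← Matrix.mul_assoc Qᴴ, hQ, Matrix.one_mul, hUB]
  have hBσ := isBlockSVD_cols hQUB hVh σh
  rw [Matrix.mul_assoc Q, Matrix.mul_assoc Q, ← hB, ← Matrix.mul_assoc] at hBσ
  have hpos : 0 < σ (k - 1) := (hσ0 k).trans_lt hgap
  have hσk (i : Fin k) : σ (k - 1) ≤ ‖(σ i : ℂ)‖ := by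
    rw [Complex.norm_real]
    exact (hσm (Nat.le_sub_one_of_lt i.2)).trans (le_abs_self _)
  have htail : ‖diagRect σ k c d‖ ≤ σ k := l2_opNorm_diagRect_le (hσ0 k) fun i _ _ => by
    simpa only [abs_of_nonneg (hσ0 _)] using hσm (Nat.le_add_right k i)
  have hQH : ‖Qᴴ‖ ≤ 1 := by
    rw [l2_opNorm_conjTranspose]
    exact l2_opNorm_le_one_of_conjTranspose_mul_self hQ
  have htail_compressed : ‖diagRect σh k ρ ρ‖ ≤ σ k :=
    (hAσ.l2_opNorm_diagRect_tail_le hQH hUB hVh hσhm hσh0 hB).trans htail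
  simpa only [schatten_eq_schattenNorm, sval_zero] using
    hAσ.max_schattenNorm_sine_le_of_iterate p hBσ hQ hQR hG
      (isUnit_diagonal_of_le_norm hpos hσk) (mul_l2_opNorm_inv_diagonal_le_one hpos hσk)
      htail htail_compressed hgap

/-- Theorem 3.5 (unitarily invariant / Schatten-p norms): accuracy of the extracted
rank-k singular subspaces. -/
theorem schatten_angles_truncated
    {k m₂ n₂ ρ : ℕ} (q : ℕ) (hk : 1 ≤ k)
    (A : Matrix (Fin (k + m₂)) (Fin (k + n₂)) ℂ)
    (U : Matrix (Fin (k + m₂)) (Fin (k + m₂)) ℂ)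
    (V : Matrix (Fin (k + n₂)) (Fin (k + n₂)) ℂ)
    (σ : ℕ → ℝ)
    (hU : Uᴴ * U = 1) (hU' : U * Uᴴ = 1)
    (hV : Vᴴ * V = 1) (hV' : V * Vᴴ = 1)
    (hσ0 : ∀ i, 0 ≤ σ i) (hσm : ∀ i j, i ≤ j → σ j ≤ σ i)
    (hA : A = U * diagRect σ 0 (k + m₂) (k + n₂) * Vᴴ)
    (hrank : 0 < σ (k - 1)) (hgap : σ k < σ (k - 1))
    (Ω : Matrix (Fin (k + n₂)) (Fin (k + ρ)) ℂ)
    (hΩ : ((colsL V)ᴴ * Ω).rank = k)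
    (Q : Matrix (Fin (k + m₂)) (Fin (k + ρ)) ℂ)
    (R : Matrix (Fin (k + ρ)) (Fin (k + ρ)) ℂ)
    (hQ : Qᴴ * Q = 1) (hR : R.BlockTriangular id)
    (hQR : (A * Aᴴ) ^ q * A * Ω = Q * R)
    (UB : Matrix (Fin (k + ρ)) (Fin (k + ρ)) ℂ)
    (Vh : Matrix (Fin (k + n₂)) (Fin (k + ρ)) ℂ)
    (σh : ℕ → ℝ)
    (hUB : UBᴴ * UB = 1) (hUB' : UB * UBᴴ = 1)
    (hVh : Vhᴴ * Vh = 1)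
    (hσh0 : ∀ i, 0 ≤ σh i) (hσhm : ∀ i j, i ≤ j → σh j ≤ σh i)
    (hB : Qᴴ * A = UB * diagRect σh 0 (k + ρ) (k + ρ) * Vhᴴ)
    :
    ∀ p : ℝ≥0∞, 1 ≤ p →
      max (schatten p ((1 - colsL (Q * UB) * (colsL (Q * UB))ᴴ) * colsL U)) (schatten p ((1 - colsL Vh * (colsL Vh)ᴴ) * colsL V)) ≤
        Real.sqrt 2 * ((σ k / σ (k - 1)) ^ (2 * q) / (1 - (σ k / σ (k - 1)))) *
          (schatten p (diagRect σ k m₂ n₂) / σ (k - 1)) * sval ((colsR V)ᴴ * Ω * rpinv ((colsL V)ᴴ * Ω)) 0 :=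
  schatten_angles_truncated_general q A U V σ hU hV hσ0 hσm hA hgap Ω _ (mul_rpinv hΩ) Q R hQ hQR
    UB Vh σh hUB hVh hσh0 hσhm hB
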